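/- Expectation of an eigenfunction under the time-m law: with v_k(i) = Δ_k·c_k(i)/π_i, Δ_k² = (Σ_{i=0}^{N_w} c_k(i)²/π_i)^{−1}, Δ_k > 0, for every k ∈ {0,...,N_w} and every natural number m: Σ_{i=0}^{N_w} v_k(i)·(T^m)_{i0} = λ_k^m·v_k(0), where λ_k = 1 − k(N+1−k)/(N1·N2). -/

import Mathlib

/-!
The vector `v_k` is a left eigenvector of `T` with eigenvalue `λ_k`; the statement then follows by
induction on `m`.  By detailed balance `π_j p_j = π_{j+1} q_{j+1}` (`detailed_balance`), this is
equivalent to `c_k` being a right eigenvector of `T`, i.e. to the three-term recurrence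
`q_{i+1} c_k(i+1) + p_{i-1} c_k(i-1) - (p_i + q_i) c_k(i) = (λ_k - 1) c_k(i)`
together with the boundary value `c_k(N_w+1) = 0`.

Here `c_k(i)` is the `i`-th coefficient of `(1-x)^k · ₂F₁(k-N1, k-N_w; N2-N_w+1; x)`, that is, up to
sign, the `k`-th iterated backward difference of the hypergeometric coefficients `hypCoeff`, extended
by zero to negative indices.  The hypergeometric coefficients satisfy a first-order recurrence, and
`fwdDiff_iterate_rec` shows by induction that the `n`-th difference satisfies the three-term
recurrence with shifted parameters: conjugating the hypergeometric operator by `(1-x)^n` shifts its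
parameters, so that each residual is just the difference of the previous ones.  The boundary value
vanishes because the generating polynomial has degree at most `N_w`.
-/

open Finset

noncomputable section

/-- Rising factorial (Pochhammer symbol) `a (a+1) ⋯ (a+m-1)` in `ℚ`. -/
def rfQ (a : ℚ) : ℕ → ℚ
  | 0 => 1
  | m + 1 => rfQ a m * (a + m)

/-- Components `c_k(i)` of the `k`-th right eigenvector of the BL transition matrix. -/
def cBL (N1 N2 Nw : ℕ) (k i : ℕ) : ℝ :=
  ((∑ n ∈ Finset.range (min k i + 1),
    (Nat.choose k n : ℚ) * (-1) ^ n
      * rfQ ((k : ℚ) - N1) (i - n) * rfQ ((k : ℚ) - Nw) (i - n)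
      / (rfQ ((N2 : ℚ) - Nw + 1) (i - n) * (Nat.factorial (i - n) : ℚ)) : ℚ) : ℝ)

/-- Up-transition probability `p_j` of the BL model. -/
def pBL (N1 N2 Nw : ℕ) (j : ℕ) : ℝ :=
  ((N1 : ℝ) - j) * ((Nw : ℝ) - j) / ((N1 : ℝ) * N2)

/-- Down-transition probability `q_j` of the BL model. -/
def qBL (N1 N2 Nb : ℕ) (j : ℕ) : ℝ :=
  (j : ℝ) * ((Nb : ℝ) - N1 + j) / ((N1 : ℝ) * N2)

/-- The Bernoulli–Laplace transition matrix `T`. -/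
def TBL (N1 N2 Nw Nb : ℕ) : Matrix (Fin (Nw + 1)) (Fin (Nw + 1)) ℝ :=
  fun i j =>
    if (i : ℕ) = (j : ℕ) + 1 then pBL N1 N2 Nw j
    else if (i : ℕ) + 1 = (j : ℕ) then qBL N1 N2 Nb j
    else if (i : ℕ) = (j : ℕ) then 1 - pBL N1 N2 Nw j - qBL N1 N2 Nb j
    else 0

/-- Eigenvalue `λ_k = 1 - k (N+1-k) / (N1 N2)`. -/
def lamBL (N1 N2 N : ℕ) (k : ℕ) : ℝ :=
  1 - (k : ℝ) * ((N : ℝ) + 1 - k) / ((N1 : ℝ) * N2)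

/-- The hypergeometric stationary distribution `π_i = C(Nw,i) C(N-Nw,N1-i) / C(N,N1)`. -/
def piBL (N1 Nw N : ℕ) (i : ℕ) : ℝ :=
  (Nat.choose Nw i : ℝ) * (Nat.choose (N - Nw) (N1 - i) : ℝ) / (Nat.choose N N1 : ℝ)

/-- The orthogonal measure `Δ_k² = (Σ_i c_k(i)²/π_i)⁻¹`. -/
def DeltaSqBL (N1 N2 Nw N : ℕ) (k : ℕ) : ℝ :=
  (∑ i ∈ Finset.range (Nw + 1), (cBL N1 N2 Nw k i) ^ 2 / piBL N1 Nw N i)⁻¹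

/-- `Δ_k > 0`, the positive square root of `Δ_k²`. -/
def DeltaBL (N1 N2 Nw N : ℕ) (k : ℕ) : ℝ :=
  Real.sqrt (DeltaSqBL N1 N2 Nw N k)

/-- Right eigenvectors of the symmetrized matrix: `v_k(i) = Δ_k c_k(i) / π_i`. -/
def vBL (N1 N2 Nw N : ℕ) (k i : ℕ) : ℝ :=
  DeltaBL N1 N2 Nw N k * cBL N1 N2 Nw k i / piBL N1 Nw N i

/-- Orthonormal eigenvectors of the symmetrized matrix: `w_k(i) = Δ_k c_k(i) / √(π_i)`. -/
def wBL (N1 N2 Nw N : ℕ) (k i : ℕ) : ℝ :=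
  DeltaBL N1 N2 Nw N k * cBL N1 N2 Nw k i / Real.sqrt (piBL N1 Nw N i)

/-- The coefficients `(A)_z (B)_z / ((C)_z z!)` of `₂F₁(A, B; C; x)`, extended by `0` to negative
indices `z`. -/
def hypCoeff (A B C : ℚ) (z : ℤ) : ℚ :=
  if z < 0 then 0
  else rfQ A z.toNat * rfQ B z.toNat / (rfQ C z.toNat * (Nat.factorial z.toNat : ℚ))

lemma rfQ_pos {a : ℚ} (ha : 0 < a) (m : ℕ) : 0 < rfQ a m := by
  induction m with
  | zero => simp [rfQ]
  | succ m ih => simp only [rfQ]; positivity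

lemma rfQ_neg_natCast_eq_zero (t m : ℕ) (h : t < m) : rfQ (-(t : ℚ)) m = 0 := by
  induction m with
  | zero => omega
  | succ m ih =>
    simp only [rfQ]
    rcases Nat.lt_succ_iff_lt_or_eq.mp h with h | h
    · rw [ih h, zero_mul]
    · simp [h]

lemma hypCoeff_natCast (A B C : ℚ) (n : ℕ) :
    hypCoeff A B C n = rfQ A n * rfQ B n / (rfQ C n * (Nat.factorial n : ℚ)) := by
  simp [hypCoeff]

lemma hypCoeff_rec (A B : ℚ) {C : ℚ} (hC : 0 < C) (z : ℤ) :
    ((z : ℚ) + 1) * (C + z) * hypCoeff A B C (z + 1) = (A + z) * (B + z) * hypCoeff A B C z := by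
  rcases lt_trichotomy z (-1) with h | h | h
  · simp [hypCoeff, show z < 0 by omega, show z + 1 < 0 by omega]
  · subst h; simp [hypCoeff]
  · obtain ⟨n, rfl⟩ := Int.eq_ofNat_of_zero_le (show 0 ≤ z by omega)
    have h1 := (rfQ_pos hC n).ne'
    have h2 : (Nat.factorial n : ℚ) ≠ 0 := by positivity
    have h3 : C + n ≠ 0 := by positivity
    have h4 : (n : ℚ) + 1 ≠ 0 := by positivity
    rw [hypCoeff_natCast, show (n : ℤ) + 1 = ((n + 1 : ℕ) : ℤ) by push_cast; rfl, hypCoeff_natCast]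
    simp only [rfQ, Nat.factorial_succ]
    push_cast
    field_simp

/-- If `f` satisfies the hypergeometric recurrence with parameters `A, B, C`, its `n`-th backward
difference (the coefficients of `(x-1)^n` times the generating function of `f`) satisfies the
eigenvalue recurrence with parameters `A - n, B - n, C`. -/
lemma fwdDiff_iterate_rec (A B C : ℚ) (f : ℤ → ℚ)
    (hf : ∀ z : ℤ, ((z : ℚ) + 1) * (C + z) * f (z + 1) = (A + z) * (B + z) * f z) (n : ℕ) :
    ∀ z : ℤ, ((z : ℚ) + 1) * (C + z) * (fwdDiff (-1))^[n] f (z + 1)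
      + (A - n + z - 1) * (B - n + z - 1) * (fwdDiff (-1))^[n] f (z - 1)
      - ((A - n + z) * (B - n + z) + z * (C + z - 1)) * (fwdDiff (-1))^[n] f z
      + n * (C - A - B + n) * (fwdDiff (-1))^[n] f z = 0 := by
  induction n with
  | zero =>
    intro z
    have h1 := hf z
    have h2 := hf (z - 1)
    simp only [sub_add_cancel] at h2
    push_cast at h2
    simp only [Function.iterate_zero, id, Nat.cast_zero]
    linear_combination h1 - h2
  | succ n ih =>
    intro z
    have h1 := ih z
    have h2 := ih (z - 1)
    simp only [Function.iterate_succ_apply', fwdDiff]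
    generalize (fwdDiff (-1))^[n] f = u at *
    simp only [sub_add_cancel, ← sub_eq_add_neg, add_sub_cancel_right] at *
    push_cast at *
    linear_combination h2 - h1

lemma cBL_eq_fwdDiff (N1 N2 Nw k i : ℕ) :
    cBL N1 N2 Nw k i = (-1) ^ k * (((fwdDiff (-1))^[k]
      (hypCoeff ((k : ℚ) - N1) ((k : ℚ) - Nw) ((N2 : ℚ) - Nw + 1)) (i : ℤ) : ℚ) : ℝ) := by
  rw [cBL, fwdDiff_iter_eq_sum_shift]
  have : ∀ q : ℚ, (-1 : ℝ) ^ k * (q : ℝ) = (((-1) ^ k * q : ℚ) : ℝ) := by intro q; push_cast; rfl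
  rw [this]
  congr 1
  rw [Finset.mul_sum]
  have hsub : range (min k i + 1) ⊆ range (k + 1) := by
    intro x; simp only [mem_range]; omega
  rw [← Finset.sum_subset hsub]
  · refine Finset.sum_congr rfl fun n hn => ?_
    have hn' : n ≤ k ∧ n ≤ i := by simp only [mem_range] at hn; omega
    have hz : (i : ℤ) + n • (-1) = ((i - n : ℕ) : ℤ) := by
      simp only [smul_neg, nsmul_eq_mul, mul_one]; omega
    have hs : (-1 : ℚ) ^ k * (-1) ^ (k - n) = (-1) ^ n := by
      rw [← pow_add, show k + (k - n) = 2 * (k - n) + n by omega, pow_add, pow_mul]; simp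
    rw [hz, hypCoeff_natCast, ← hs, zsmul_eq_mul]
    push_cast
    ring
  · intro n _ hn
    -- for `n > i` the coefficient has a negative index
    have hz : (i : ℤ) + n • (-1) < 0 := by
      simp only [smul_neg, nsmul_eq_mul, mul_one]
      simp only [mem_range] at *; omega
    rw [hypCoeff, if_pos hz, smul_zero, mul_zero]

lemma cBL_boundary (N1 N2 Nw k : ℕ) (hk : k ≤ Nw) : cBL N1 N2 Nw k (Nw + 1) = 0 := by
  rw [cBL]
  norm_cast
  refine Finset.sum_eq_zero fun n hn => ?_
  simp only [mem_range] at hn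
  have h := rfQ_neg_natCast_eq_zero (Nw - k) (Nw + 1 - n) (by omega)
  rw [Nat.cast_sub hk, neg_sub] at h
  simp [h]

/-- The three-term recurrence for `c_k` at the index `i + 1`. -/
lemma cBL_rec (N1 N2 Nw k i : ℕ) (hw2 : Nw ≤ N2) :
    ((i : ℝ) + 2) * (N2 - Nw + 1 + (i + 1)) * cBL N1 N2 Nw k (i + 2)
      + (N1 - i) * (Nw - i) * cBL N1 N2 Nw k i
      - ((N1 - (i + 1)) * (Nw - (i + 1)) + (i + 1) * (N2 - Nw + 1 + i)) * cBL N1 N2 Nw k (i + 1)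
      + k * (N1 + N2 + 1 - k) * cBL N1 N2 Nw k (i + 1) = 0 := by
  have hC : (0 : ℚ) < (N2 : ℚ) - Nw + 1 := by
    have : (Nw : ℚ) ≤ N2 := by exact_mod_cast hw2
    linarith
  have h := fwdDiff_iterate_rec _ _ _ _
    (hypCoeff_rec ((k : ℚ) - N1) ((k : ℚ) - Nw) hC) k ((i : ℤ) + 1)
  simp only [cBL_eq_fwdDiff]
  rw [show (i : ℤ) + 1 + 1 = ((i + 2 : ℕ) : ℤ) by push_cast; ring,
    show (i : ℤ) + 1 - 1 = (i : ℤ) by ring,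
    show (i : ℤ) + 1 = ((i + 1 : ℕ) : ℤ) by push_cast; ring] at h
  have h' := congrArg (Rat.cast : ℚ → ℝ) h
  push_cast at h' ⊢
  linear_combination (-1) ^ k * h'

/-- The three-term recurrence for `c_k` at index `0`, where `c_k(-1) = 0`. -/
lemma cBL_rec_zero (N1 N2 Nw k : ℕ) (hw2 : Nw ≤ N2) :
    ((N2 : ℝ) - Nw + 1) * cBL N1 N2 Nw k 1 - N1 * Nw * cBL N1 N2 Nw k 0
      + k * (N1 + N2 + 1 - k) * cBL N1 N2 Nw k 0 = 0 := by
  have hC : (0 : ℚ) < (N2 : ℚ) - Nw + 1 := by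
    have : (Nw : ℚ) ≤ N2 := by exact_mod_cast hw2
    linarith
  have h := fwdDiff_iterate_rec _ _ _ _
    (hypCoeff_rec ((k : ℚ) - N1) ((k : ℚ) - Nw) hC) k 0
  have h0 : (fwdDiff (-1))^[k]
      (hypCoeff ((k : ℚ) - N1) ((k : ℚ) - Nw) ((N2 : ℚ) - Nw + 1)) ((0 : ℤ) - 1) = 0 := by
    rw [fwdDiff_iter_eq_sum_shift]
    refine Finset.sum_eq_zero fun n _ => ?_
    have hz : (0 : ℤ) - 1 + n • (-1) < 0 := by
      simp only [smul_neg, nsmul_eq_mul, mul_one]; omega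
    rw [hypCoeff, if_pos hz, smul_zero]
  rw [h0] at h
  simp only [cBL_eq_fwdDiff]
  rw [show (0 : ℤ) + 1 = ((1 : ℕ) : ℤ) by norm_num] at h
  have h' := congrArg (Rat.cast : ℚ → ℝ) h
  push_cast at h' ⊢
  linear_combination (-1) ^ k * h'

lemma piBL_pos (N1 N2 Nw N : ℕ) (hN : N = N1 + N2) (hw2 : Nw ≤ N2)
    (i : ℕ) (hi : i ≤ Nw) : 0 < piBL N1 Nw N i := by
  have h1 := Nat.choose_pos hi
  have h2 := Nat.choose_pos (show N1 - i ≤ N - Nw by omega)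
  have h3 := Nat.choose_pos (show N1 ≤ N by omega)
  unfold piBL
  positivity

lemma detailed_balance (N1 N2 Nw Nb N : ℕ) (hN : N = N1 + N2) (hwb : Nw + Nb = N)
    (hw1 : Nw ≤ N1) (hw2 : Nw ≤ N2) (j : ℕ) (hj : j < Nw) :
    piBL N1 Nw N j * pBL N1 N2 Nw j = piBL N1 Nw N (j + 1) * qBL N1 N2 Nb (j + 1) := by
  obtain ⟨t, ht⟩ : ∃ t, N1 = j + 1 + t := ⟨N1 - (j + 1), by omega⟩
  have h1 := Nat.choose_succ_right_eq Nw j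
  have h2 := Nat.choose_succ_right_eq Nb t
  have e1 : N - Nw = Nb := by omega
  have e2 : N1 - j = t + 1 := by omega
  have e3 : N1 - (j + 1) = t := by omega
  have h1' := congrArg (Nat.cast : ℕ → ℝ) h1
  have h2' := congrArg (Nat.cast : ℕ → ℝ) h2
  rw [Nat.cast_mul, Nat.cast_mul, Nat.cast_sub (by omega)] at h1' h2'
  have ht' : (N1 : ℝ) = j + 1 + t := by rw [ht]; push_cast; ring
  unfold piBL pBL qBL
  rw [e1, e2, e3]
  have key : (Nat.choose Nw j : ℝ) * Nat.choose Nb (t + 1) * ((N1 - j) * (Nw - j))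
      = Nat.choose Nw (j + 1) * Nat.choose Nb t * ((j + 1) * (Nb - N1 + (j + 1))) := by
    rw [ht']
    push_cast at h1' h2'
    linear_combination (Nat.choose Nw j : ℝ) * (Nw - j) * h2'
      - (Nat.choose Nb t : ℝ) * (Nb - t) * h1'
  push_cast
  rw [div_mul_div_comm, div_mul_div_comm, key]

/-- `v_k` is a left eigenvector of `T`. -/
lemma vBL_vecMul (N1 N2 Nw Nb N : ℕ)
    (hN1 : 1 ≤ N1) (hN2 : 1 ≤ N2) (hN : N = N1 + N2) (hwb : Nw + Nb = N)
    (hw1 : Nw ≤ N1) (hw2 : Nw ≤ N2) (k : ℕ) (hk : k ≤ Nw) (j : Fin (Nw + 1)) :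
    ∑ i : Fin (Nw + 1), vBL N1 N2 Nw N k i * TBL N1 N2 Nw Nb i j
      = lamBL N1 N2 N k * vBL N1 N2 Nw N k j := by
  obtain ⟨j, hj⟩ := j
  have hD : (N1 : ℝ) * N2 ≠ 0 := by
    have : 0 < N1 * N2 := by positivity
    exact_mod_cast this.ne'
  have hNr : (N : ℝ) = N1 + N2 := by rw [hN]; push_cast; ring
  have hNb : (Nb : ℝ) = N1 + N2 - Nw := by
    have : (Nw : ℝ) + Nb = N1 + N2 := by exact_mod_cast hwb.trans hN
    linarith
  -- at `j = N_w` both sides vanish: `p_j = 0` on the left, `c_k(j+1) = 0` on the right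
  have up : vBL N1 N2 Nw N k (j + 1) * pBL N1 N2 Nw j * piBL N1 Nw N j
      = DeltaBL N1 N2 Nw N k * cBL N1 N2 Nw k (j + 1) * qBL N1 N2 Nb (j + 1) := by
    rcases Nat.lt_succ_iff_lt_or_eq.mp hj with h | h
    · have hp := (piBL_pos N1 N2 Nw N hN hw2 (j + 1) h).ne'
      have hb := detailed_balance N1 N2 Nw Nb N hN hwb hw1 hw2 j h
      unfold vBL
      field_simp
      linear_combination DeltaBL N1 N2 Nw N k * cBL N1 N2 Nw k (j + 1) * hb
    · subst h
      simp [cBL_boundary _ _ _ _ hk, pBL]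
  have hpj := (piBL_pos N1 N2 Nw N hN hw2 j (by omega)).ne'
  have hvj : vBL N1 N2 Nw N k j * piBL N1 Nw N j
      = DeltaBL N1 N2 Nw N k * cBL N1 N2 Nw k j := by
    unfold vBL; field_simp
  have hsum : ∑ i : Fin (Nw + 1), vBL N1 N2 Nw N k i * TBL N1 N2 Nw Nb i ⟨j, hj⟩
      = vBL N1 N2 Nw N k (j + 1) * pBL N1 N2 Nw j
        + (if j = 0 then 0 else vBL N1 N2 Nw N k (j - 1) * qBL N1 N2 Nb j)
        + vBL N1 N2 Nw N k j * (1 - pBL N1 N2 Nw j - qBL N1 N2 Nb j) := by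
    simp only [TBL]
    rw [Fin.sum_univ_eq_sum_range (fun i => vBL N1 N2 Nw N k i *
      (if i = j + 1 then pBL N1 N2 Nw j else if i + 1 = j then qBL N1 N2 Nb j
        else if i = j then 1 - pBL N1 N2 Nw j - qBL N1 N2 Nb j else 0))]
    -- the row index `N_w + 1` may be added to the sum, since `p_{N_w} = 0`
    have hext : ∀ g : ℕ → ℝ, g (Nw + 1) = 0 →
        ∑ i ∈ range (Nw + 1), g i = ∑ i ∈ range (Nw + 2), g i := by
      intro g hg; rw [Finset.sum_range_succ g (Nw + 1), hg, add_zero]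
    rw [hext]
    · have hsplit : ∀ i ∈ range (Nw + 2), vBL N1 N2 Nw N k i *
          (if i = j + 1 then pBL N1 N2 Nw j else if i + 1 = j then qBL N1 N2 Nb j
            else if i = j then 1 - pBL N1 N2 Nw j - qBL N1 N2 Nb j else 0)
          = (if i = j + 1 then vBL N1 N2 Nw N k i * pBL N1 N2 Nw j else 0)
            + (if i = j - 1 then
                (if j = 0 then 0 else vBL N1 N2 Nw N k i * qBL N1 N2 Nb j) else 0)
            + (if i = j then
                vBL N1 N2 Nw N k i * (1 - pBL N1 N2 Nw j - qBL N1 N2 Nb j) else 0) := by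
        intro i _
        split_ifs <;> first | omega | ring
      rw [Finset.sum_congr rfl hsplit, Finset.sum_add_distrib, Finset.sum_add_distrib,
        Finset.sum_ite_eq', Finset.sum_ite_eq', Finset.sum_ite_eq']
      simp [show j + 1 < Nw + 2 by omega, show j - 1 < Nw + 2 by omega,
        show j < Nw + 2 by omega]
    · rcases Nat.lt_succ_iff_lt_or_eq.mp hj with h | h
      · simp [show Nw + 1 + 1 ≠ j by omega,
          show Nw + 1 ≠ j by omega, show Nw ≠ j by omega]
      · subst h; simp [pBL]
  rw [hsum]
  apply mul_right_cancel₀ hpj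
  rcases j with _ | j
  · have hr := cBL_rec_zero N1 N2 Nw k hw2
    have hq : qBL N1 N2 Nb 0 = 0 := by simp [qBL]
    simp only [if_true, hq]
    have e : (lamBL N1 N2 N k - (1 - pBL N1 N2 Nw 0)) * (N1 * N2)
        = N1 * Nw - k * (N1 + N2 + 1 - k) := by
      simp only [lamBL, pBL, hNr]; push_cast; field_simp; ring
    have hq1 : qBL N1 N2 Nb (0 + 1) * (N1 * N2) = (N2 : ℝ) - Nw + 1 := by
      simp only [qBL, hNb]; push_cast; field_simp; ring
    apply mul_right_cancel₀ hD
    linear_combination (N1 * N2 : ℝ) * up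
      + ((1 - pBL N1 N2 Nw 0) - lamBL N1 N2 N k) * (N1 * N2 : ℝ) * hvj
      + DeltaBL N1 N2 Nw N k * (hr + cBL N1 N2 Nw k 1 * hq1 - cBL N1 N2 Nw k 0 * e)
  · have hr := cBL_rec N1 N2 Nw k j hw2
    have hpj' := (piBL_pos N1 N2 Nw N hN hw2 j (by omega)).ne'
    have down : vBL N1 N2 Nw N k j * qBL N1 N2 Nb (j + 1) * piBL N1 Nw N (j + 1)
        = DeltaBL N1 N2 Nw N k * cBL N1 N2 Nw k j * pBL N1 N2 Nw j := by
      have hb := detailed_balance N1 N2 Nw Nb N hN hwb hw1 hw2 j (by omega)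
      unfold vBL
      field_simp
      linear_combination -DeltaBL N1 N2 Nw N k * cBL N1 N2 Nw k j * hb
    simp only [Nat.succ_ne_zero, if_false, Nat.add_sub_cancel]
    have e : (lamBL N1 N2 N k - (1 - pBL N1 N2 Nw (j + 1) - qBL N1 N2 Nb (j + 1))) * (N1 * N2)
        = (N1 - (j + 1)) * (Nw - (j + 1)) + (j + 1) * (N2 - Nw + 1 + j)
          - k * (N1 + N2 + 1 - k) := by
      simp only [lamBL, pBL, qBL, hNr, hNb]; push_cast; field_simp; ring
    have hq1 : qBL N1 N2 Nb (j + 1 + 1) * (N1 * N2)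
        = ((j : ℝ) + 2) * (N2 - Nw + 1 + (j + 1)) := by
      simp only [qBL, hNb]; push_cast; field_simp; ring
    have hp1 : pBL N1 N2 Nw j * (N1 * N2) = ((N1 : ℝ) - j) * (Nw - j) := by
      simp only [pBL]; field_simp
    apply mul_right_cancel₀ hD
    linear_combination (N1 * N2 : ℝ) * up + (N1 * N2 : ℝ) * down
      + ((1 - pBL N1 N2 Nw (j + 1) - qBL N1 N2 Nb (j + 1)) - lamBL N1 N2 N k)
        * (N1 * N2 : ℝ) * hvj
      + DeltaBL N1 N2 Nw N k * (hr + cBL N1 N2 Nw k (j + 2) * hq1 + cBL N1 N2 Nw k j * hp1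
        - cBL N1 N2 Nw k (j + 1) * e)

/-- Expectation of the eigenfunction `v_k` under the time-`m` law started at `0`:
`Σ_i v_k(i) (T^m)_{i0} = λ_k^m v_k(0)`. -/
theorem BL_eigenfunction_expectation
    (N1 N2 Nw Nb N : ℕ)
    (hN1 : 1 ≤ N1) (hN2 : 1 ≤ N2) (hN : N = N1 + N2) (hwb : Nw + Nb = N)
    (hw1 : Nw ≤ N1) (hw2 : Nw ≤ N2)
    (k : ℕ) (hk : k ≤ Nw) (m : ℕ) :
    ∑ i : Fin (Nw + 1), vBL N1 N2 Nw N k i * ((TBL N1 N2 Nw Nb) ^ m) i 0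
      = (lamBL N1 N2 N k) ^ m * vBL N1 N2 Nw N k 0 := by
  induction m with
  | zero => simp [Matrix.one_apply]
  | succ m ih =>
    simp only [pow_succ' (TBL N1 N2 Nw Nb), Matrix.mul_apply, Finset.mul_sum]
    rw [Finset.sum_comm]
    simp only [← mul_assoc, ← Finset.sum_mul,
      vBL_vecMul N1 N2 Nw Nb N hN1 hN2 hN hwb hw1 hw2 k hk]
    simp only [mul_assoc, ← Finset.mul_sum, ih]
    ring
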